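/- arXiv:1811.07333 — 7 statements merged into one kernel-verified Lean document; each statement's English description precedes it below -/
import Mathlib

section
/- Let n ≥ 0 and t ∈ ℝ. Regard σ_t as a map of the open set {(x,y) ∈ ℝ^{n+1} × ℝ^{n+1} : y ≠ 0}, and let (x,y) ∈ M_n with y ≠ 0. Then for every vector a = (a₁,a₂) in the tangent space T_{(x,y)}M_n, the canonical 1-form is preserved: λ_{σ_t(x,y)}(Dσ_t|_{(x,y)}(a)) = λ_{(x,y)}(a), where Dσ_t|_{(x,y)} is the Fréchet derivative of σ_t at (x,y). (This expresses that σ_t, the time-t normalized geodesic flow, is an exact symplectomorphism of T*Sⁿ away from the zero section.) -/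
open scoped RealInnerProductSpace

/-- The map `σ_t(x,y) = (cos t · x + (sin t / ‖y‖) · y, −‖y‖ sin t · x + cos t · y)`. -/
noncomputable def sigmaT {m : ℕ} (t : ℝ)
    (p : EuclideanSpace ℝ (Fin m) × EuclideanSpace ℝ (Fin m)) :
    EuclideanSpace ℝ (Fin m) × EuclideanSpace ℝ (Fin m) :=
  (Real.cos t • p.1 + (Real.sin t / ‖p.2‖) • p.2,
   (-(‖p.2‖ * Real.sin t)) • p.1 + Real.cos t • p.2)

/-- `σ_t` preserves the canonical 1-form `λ_{(x,y)}(a₁,a₂) = ⟪y, a₁⟫` on tangent vectors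
to `M_n` at points `(x,y) ∈ M_n` with `y ≠ 0`:
`λ_{σ_t(x,y)}(Dσ_t|_{(x,y)}(a)) = λ_{(x,y)}(a)`. -/
theorem stmt_5 (n : ℕ) (t : ℝ) (x y : EuclideanSpace ℝ (Fin (n + 1)))
    (hx : ‖x‖ = 1) (hxy : ⟪x, y⟫ = 0) (hy : y ≠ 0)
    (a : EuclideanSpace ℝ (Fin (n + 1)) × EuclideanSpace ℝ (Fin (n + 1)))
    (ha1 : ⟪x, a.1⟫ = 0) (ha2 : ⟪a.1, y⟫ + ⟪x, a.2⟫ = 0) :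
    ⟪(sigmaT t (x, y)).2, (fderiv ℝ (sigmaT t) (x, y) a).1⟫ = ⟪y, a.1⟫ := by
  have hr : ‖y‖ ≠ 0 := norm_ne_zero_iff.mpr hy
  have hd2 : DifferentiableAt ℝ
      (fun p : EuclideanSpace ℝ (Fin (n + 1)) × EuclideanSpace ℝ (Fin (n + 1)) => ‖p.2‖)
      (x, y) := DifferentiableAt.norm ℝ differentiableAt_snd hy
  have hd : DifferentiableAt ℝ (sigmaT (m := n + 1) t) (x, y) := by
    unfold sigmaT
    have hq : DifferentiableAt ℝ
        (fun p : EuclideanSpace ℝ (Fin (n + 1)) × EuclideanSpace ℝ (Fin (n + 1)) =>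
          Real.sin t / ‖p.2‖) (x, y) := by
      simp only [div_eq_mul_inv]
      exact (hd2.fun_inv hr).const_mul _
    fun_prop
  -- derivative along the line through `(x, y)` in direction `a`
  have hline : HasDerivAt (fun s : ℝ => (x, y) + s • a) a 0 := by
    simpa using ((hasDerivAt_id (0 : ℝ)).smul_const a).const_add (x, y)
  have h1 : HasDerivAt (fun s : ℝ => (sigmaT t ((x, y) + s • a)).1)
      (fderiv ℝ (sigmaT t) (x, y) a).1 0 := by
    have hF : HasFDerivAt (sigmaT t) (fderiv ℝ (sigmaT t) (x, y)) ((x, y) + (0 : ℝ) • a) := by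
      simpa using hd.hasFDerivAt
    have h := hF.comp_hasDerivAt (0 : ℝ) hline
    exact (hasFDerivAt_fst (𝕜 := ℝ)).comp_hasDerivAt (0 : ℝ) h
  have hX : HasDerivAt (fun s : ℝ => x + s • a.1) a.1 0 := by
    simpa using ((hasDerivAt_id (0 : ℝ)).smul_const a.1).const_add x
  have hY : HasDerivAt (fun s : ℝ => y + s • a.2) a.2 0 := by
    simpa using ((hasDerivAt_id (0 : ℝ)).smul_const a.2).const_add y
  have hN : HasDerivAt (fun s : ℝ => ‖y + s • a.2‖) (⟪y, a.2⟫ / ‖y‖) 0 := by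
    have h := (hY.norm_sq).sqrt (by simpa using hy)
    simp only [Real.sqrt_sq (norm_nonneg _), zero_smul, add_zero] at h
    convert h using 1
    field_simp
  have h2 : HasDerivAt (fun s : ℝ => (sigmaT t ((x, y) + s • a)).1)
      (Real.cos t • a.1 + ((Real.sin t / ‖y‖) • a.2
        + (-(Real.sin t * (⟪y, a.2⟫ / ‖y‖)) / ‖y‖ ^ 2) • y)) 0 := by
    have hq := ((hasDerivAt_const (0 : ℝ) (Real.sin t)).fun_div hN (by simpa using hr)).fun_smul hY
    have h := (hX.fun_const_smul (Real.cos t)).fun_add hq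
    simpa [sigmaT] using h
  rw [h1.unique h2]
  have hxx : ⟪x, x⟫ = 1 := by rw [real_inner_self_eq_norm_sq, hx]; norm_num
  have hya : ⟪x, a.2⟫ = -⟪y, a.1⟫ := by rw [real_inner_comm a.1 y]; linarith
  simp only [sigmaT, inner_add_left, inner_add_right, real_inner_smul_left,
    real_inner_smul_right, ha1, hxy, hya, real_inner_self_eq_norm_sq]
  field_simp
  linear_combination ‖y‖ ^ 2 * ⟪y, a.1⟫ * Real.sin_sq_add_cos_sq t
end

section
/- Let n ≥ 0 and let g : ℝ → ℝ be a differentiable function. Define the Dehn–Seidel twist map τ_g on {(x,y) ∈ ℝ^{n+1} × ℝ^{n+1} : y ≠ 0} by τ_g(x,y) = σ_{g(‖y‖)}(x,y). Then τ_g is a symplectomorphism of the punctured cotangent bundle model: for every (x,y) ∈ M_n with y ≠ 0 and all vectors a,b in the tangent space T_{(x,y)}M_n, one has ω(Dτ_g|_{(x,y)}(a), Dτ_g|_{(x,y)}(b)) = ω(a,b), where Dτ_g|_{(x,y)} is the Fréchet derivative of τ_g at (x,y). -/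
open scoped RealInnerProductSpace

/-- The Dehn–Seidel twist with profile function `g`: `τ_g(x,y) = σ_{g(‖y‖)}(x,y)`. -/
noncomputable def dehnTwist {m : ℕ} (g : ℝ → ℝ)
    (p : EuclideanSpace ℝ (Fin m) × EuclideanSpace ℝ (Fin m)) :
    EuclideanSpace ℝ (Fin m) × EuclideanSpace ℝ (Fin m) :=
  sigmaT (g ‖p.2‖) p

/-- The standard symplectic bilinear form `ω((a₁,a₂),(b₁,b₂)) = ⟪a₁,b₂⟫ − ⟪a₂,b₁⟫`
on `ℝ^m × ℝ^m`. -/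
noncomputable def stdSymp {m : ℕ}
    (a b : EuclideanSpace ℝ (Fin m) × EuclideanSpace ℝ (Fin m)) : ℝ :=
  ⟪a.1, b.2⟫ - ⟪a.2, b.1⟫

theorem dehnTwist_fderiv_apply {m : ℕ} (g : ℝ → ℝ) (hg : Differentiable ℝ g)
    (x y : EuclideanSpace ℝ (Fin m)) (hy : y ≠ 0)
    (a : EuclideanSpace ℝ (Fin m) × EuclideanSpace ℝ (Fin m)) :
    fderiv ℝ (dehnTwist g) (x, y) a =
      (Real.cos (g ‖y‖) • a.1 + (-(Real.sin (g ‖y‖) * (deriv g ‖y‖ * (⟪y, a.2⟫ / ‖y‖)))) • x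
        + ((Real.sin (g ‖y‖) / ‖y‖) • a.2
        + ((Real.cos (g ‖y‖) * (deriv g ‖y‖ * (⟪y, a.2⟫ / ‖y‖)) * ‖y‖
            - Real.sin (g ‖y‖) * (⟪y, a.2⟫ / ‖y‖)) / ‖y‖ ^ 2) • y),
       (-(‖y‖ * Real.sin (g ‖y‖))) • a.1
        + (-((⟪y, a.2⟫ / ‖y‖) * Real.sin (g ‖y‖)
          + ‖y‖ * (Real.cos (g ‖y‖) * (deriv g ‖y‖ * (⟪y, a.2⟫ / ‖y‖))))) • x
        + (Real.cos (g ‖y‖) • a.2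
        + (-(Real.sin (g ‖y‖) * (deriv g ‖y‖ * (⟪y, a.2⟫ / ‖y‖)))) • y)) := by
  have hr : ‖y‖ ≠ 0 := norm_ne_zero_iff.mpr hy
  have hd : DifferentiableAt ℝ (dehnTwist g) (x, y) := by
    have hn : DifferentiableAt ℝ
        (fun p : EuclideanSpace ℝ (Fin m) × EuclideanSpace ℝ (Fin m) => ‖p.2‖) (x, y) :=
      DifferentiableAt.norm ℝ differentiableAt_snd hy
    have hgn : DifferentiableAt ℝ
        (fun p : EuclideanSpace ℝ (Fin m) × EuclideanSpace ℝ (Fin m) => g ‖p.2‖) (x, y) :=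
      DifferentiableAt.comp (x, y) (hg _) hn
    have hdiv : DifferentiableAt ℝ
        (fun p : EuclideanSpace ℝ (Fin m) × EuclideanSpace ℝ (Fin m) =>
          Real.sin (g ‖p.2‖) / ‖p.2‖) (x, y) := by
      simp only [div_eq_mul_inv]
      exact hgn.sin.mul (DifferentiableAt.comp (x, y) (differentiableAt_inv hr) hn)
    unfold dehnTwist sigmaT
    refine DifferentiableAt.prodMk ?_ ?_
    · exact (hgn.cos.smul differentiableAt_fst).add
        (hdiv.smul differentiableAt_snd)
    · exact ((hn.mul hgn.sin).neg.smul differentiableAt_fst).add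
        (hgn.cos.smul differentiableAt_snd)
  have hX : HasDerivAt (fun t : ℝ => x + t • a.1) a.1 0 := by
    simpa using ((hasDerivAt_id (0 : ℝ)).smul_const a.1).const_add x
  have hY : HasDerivAt (fun t : ℝ => y + t • a.2) a.2 0 := by
    simpa using ((hasDerivAt_id (0 : ℝ)).smul_const a.2).const_add y
  have hN : HasDerivAt (fun t : ℝ => ‖y + t • a.2‖) (⟪y, a.2⟫ / ‖y‖) 0 := by
    have h := hY.norm_sq.sqrt (by simpa using hr)
    simp only [Real.sqrt_sq (norm_nonneg _), zero_smul, add_zero] at h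
    convert h using 1
    field_simp
  have hG : HasDerivAt (fun t : ℝ => g ‖y + t • a.2‖) (deriv g ‖y‖ * (⟪y, a.2⟫ / ‖y‖)) 0 := by
    have h1 : HasDerivAt g (deriv g ‖y‖) ‖y + (0 : ℝ) • a.2‖ := by
      simpa using (hg ‖y‖).hasDerivAt
    exact h1.comp (0 : ℝ) hN
  have h1 := ((hG.cos.smul hX).add
        ((hG.sin.div hN (by simpa using hr)).smul hY)).prodMk
        (((hN.mul hG.sin).neg.smul hX).add (hG.cos.smul hY))
  have hL : HasDerivAt (fun t : ℝ => (x, y) + t • a) a 0 := by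
    simpa using ((hasDerivAt_id (0 : ℝ)).smul_const a).const_add (x, y)
  have hd' : HasFDerivAt (dehnTwist g) (fderiv ℝ (dehnTwist g) (x, y)) ((x, y) + (0 : ℝ) • a) := by
    simpa using hd.hasFDerivAt
  have h2 := hd'.comp_hasDerivAt (0 : ℝ) hL
  refine (h2.unique h1).trans ?_
  simp

/-- The Dehn–Seidel twist `τ_g` is a symplectomorphism of the punctured cotangent bundle
model: on tangent vectors to `M_n` at `(x,y) ∈ M_n` with `y ≠ 0`,
`ω(Dτ_g(a), Dτ_g(b)) = ω(a,b)`. -/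
theorem stmt_6 (n : ℕ) (g : ℝ → ℝ) (hg : Differentiable ℝ g)
    (x y : EuclideanSpace ℝ (Fin (n + 1)))
    (hx : ‖x‖ = 1) (hxy : ⟪x, y⟫ = 0) (hy : y ≠ 0)
    (a b : EuclideanSpace ℝ (Fin (n + 1)) × EuclideanSpace ℝ (Fin (n + 1)))
    (ha1 : ⟪x, a.1⟫ = 0) (ha2 : ⟪a.1, y⟫ + ⟪x, a.2⟫ = 0)
    (hb1 : ⟪x, b.1⟫ = 0) (hb2 : ⟪b.1, y⟫ + ⟪x, b.2⟫ = 0) :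
    stdSymp (fderiv ℝ (dehnTwist g) (x, y) a) (fderiv ℝ (dehnTwist g) (x, y) b) =
      stdSymp a b := by
  have hr : ‖y‖ ≠ 0 := norm_ne_zero_iff.mpr hy
  have hxx : ⟪x, x⟫ = 1 := by rw [real_inner_self_eq_norm_sq, hx]; norm_num
  have hyy : ⟪y, y⟫ = ‖y‖ ^ 2 := real_inner_self_eq_norm_sq y
  have hcs := Real.sin_sq_add_cos_sq (g ‖y‖)
  rw [dehnTwist_fderiv_apply g hg x y hy a, dehnTwist_fderiv_apply g hg x y hy b]
  obtain ⟨a1, a2⟩ := a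
  obtain ⟨b1, b2⟩ := b
  simp only at ha1 ha2 hb1 hb2
  have ha3 : ⟪x, a2⟫ = -⟪y, a1⟫ := by rw [real_inner_comm a1 y]; linarith
  have hb3 : ⟪x, b2⟫ = -⟪y, b1⟫ := by rw [real_inner_comm b1 y]; linarith
  simp only [stdSymp, inner_add_left, inner_add_right, real_inner_smul_left,
    real_inner_smul_right]
  rw [real_inner_comm x a1, real_inner_comm x a2, real_inner_comm y a1, real_inner_comm y a2,
    real_inner_comm x y, real_inner_comm b1 a1, real_inner_comm b1 a2, real_inner_comm b2 a1,
    real_inner_comm b2 a2, ha3, hb3, ha1, hb1, hxy, hxx, hyy]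
  generalize Real.sin (g ‖y‖) = s at *
  generalize Real.cos (g ‖y‖) = c at *
  generalize deriv g ‖y‖ = G at *
  generalize ‖y‖ = r at *
  field_simp
  linear_combination r ^ 4 * (⟪b2, a1⟫ - ⟪b1, a2⟫) * hcs
end

section
/- Let n ≥ 0, let k be an integer, and let g : ℝ → ℝ be continuous with g(0) = kπ. Let x₀ ∈ ℝ^{n+1} with ‖x₀‖ = 1. Then, as (x,y) tends to (x₀,0) within {(x,y) ∈ M_n : y ≠ 0}, the value σ_{g(‖y‖)}(x,y) tends to ((−1)ᵏ·x₀, 0). (In particular, for odd k the k-fold Dehn–Seidel twist τ_k, defined as σ_{g_k(‖y‖)} away from the zero section, extends continuously over the zero section by −Id, as in the paper's definition of τ_k.) -/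
open scoped RealInnerProductSpace Topology

/-- If `g` is continuous with `g(0) = kπ`, then as `(x,y) → (x₀,0)` within
`{(x,y) ∈ M_n : y ≠ 0}`, the value `σ_{g(‖y‖)}(x,y)` tends to `((−1)ᵏ·x₀, 0)`.
So the `k`-fold Dehn–Seidel twist extends continuously over the zero section by
`(−1)ᵏ · Id` (by `−Id` for odd `k`). -/
theorem stmt_7 (n : ℕ) (k : ℤ) (g : ℝ → ℝ) (hg : Continuous g)
    (hg0 : g 0 = k * Real.pi)
    (x₀ : EuclideanSpace ℝ (Fin (n + 1))) (hx₀ : ‖x₀‖ = 1) :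
    Filter.Tendsto (fun p : EuclideanSpace ℝ (Fin (n + 1)) × EuclideanSpace ℝ (Fin (n + 1)) =>
        sigmaT (g ‖p.2‖) p)
      (𝓝[{p : EuclideanSpace ℝ (Fin (n + 1)) × EuclideanSpace ℝ (Fin (n + 1)) |
          ‖p.1‖ = 1 ∧ ⟪p.1, p.2⟫ = 0 ∧ p.2 ≠ 0}] (x₀, 0))
      (𝓝 (((-1 : ℝ) ^ k • x₀, 0))) := by
  refine Filter.Tendsto.mono_left ?_ nhdsWithin_le_nhds
  have hn : Continuous (fun p : EuclideanSpace ℝ (Fin (n + 1)) × EuclideanSpace ℝ (Fin (n + 1)) =>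
      g ‖p.2‖) := by fun_prop
  have hc := (Real.continuous_cos.comp hn).tendsto (x₀, 0)
  have hs := (Real.continuous_sin.comp hn).tendsto (x₀, 0)
  simp only [Function.comp_def, norm_zero, hg0, Real.cos_int_mul_pi, Real.sin_int_mul_pi] at hc hs
  have h1 := (continuous_fst (X := EuclideanSpace ℝ (Fin (n + 1)))
    (Y := EuclideanSpace ℝ (Fin (n + 1)))).tendsto (x₀, 0)
  have h2 := (continuous_snd (X := EuclideanSpace ℝ (Fin (n + 1)))
    (Y := EuclideanSpace ℝ (Fin (n + 1)))).tendsto (x₀, 0)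
  have hq : Filter.Tendsto
      (fun p : EuclideanSpace ℝ (Fin (n + 1)) × EuclideanSpace ℝ (Fin (n + 1)) =>
        (Real.sin (g ‖p.2‖) / ‖p.2‖) • p.2) (𝓝 (x₀, 0)) (𝓝 0) := by
    refine squeeze_zero_norm (fun p => ?_) (by simpa using hs.abs)
    rw [norm_smul, norm_div, norm_norm, Real.norm_eq_abs]
    rcases eq_or_ne ‖p.2‖ 0 with h | h
    · rw [h, mul_zero]
      exact abs_nonneg _
    · rw [div_mul_cancel₀ _ h]
  refine Filter.Tendsto.prodMk_nhds ?_ ?_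
  · simpa using (hc.smul h1).add hq
  · simpa using ((h2.norm.mul hs).neg.smul h1).add (hc.smul h2)
end

section
/- Let n ≥ 0, let ε > 0 and δ > 0, and let g : ℝ → ℝ satisfy g(s) > ε/2 for all s with 0 ≤ s ≤ δ/2. Then for every w ∈ ℝ^{n+2} with ‖w‖ = 1 and every (x,y) ∈ M_n, the Euclidean distance in ℝ^{n+2} × ℝ^{n+2} between the point (w,0) of the zero section and the point ((x,0),(y,g(‖y‖))) is strictly greater than (1/2)·min(ε,δ). (This is the distance estimate in the proof of Theorem 1.1, which guarantees that the pushed-off copy j₁(DT*Sⁿ) stays at distance more than m₀ = (1/2)·min(ε,δ) from the zero section of DT*S^{n+1}.) -/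
open scoped RealInnerProductSpace

/-- Append a real coordinate to a vector in Euclidean space:
`snocE v c = (v, c) ∈ ℝ^{m+1}`. -/
noncomputable def snocE {m : ℕ} (v : EuclideanSpace ℝ (Fin m)) (c : ℝ) :
    EuclideanSpace ℝ (Fin (m + 1)) :=
  (EuclideanSpace.equiv (Fin (m + 1)) ℝ).symm (Fin.snoc ((EuclideanSpace.equiv (Fin m) ℝ) v) c)

/-- The distance estimate of the proof of Theorem 1.1: if `g(s) > ε/2` for all
`0 ≤ s ≤ δ/2`, then every point `((x,0),(y,g(‖y‖)))` of the pushed-off copy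
`j₁(DT*Sⁿ)` lies at Euclidean distance greater than `(1/2)·min(ε,δ)` from every point
`(w,0)` of the zero section of `DT*S^{n+1}`. -/
theorem stmt_9 (n : ℕ) (ε δ : ℝ) (hε : 0 < ε) (hδ : 0 < δ)
    (g : ℝ → ℝ) (hg : ∀ s : ℝ, 0 ≤ s → s ≤ δ / 2 → ε / 2 < g s)
    (w : EuclideanSpace ℝ (Fin (n + 2))) (hw : ‖w‖ = 1)
    (x y : EuclideanSpace ℝ (Fin (n + 1)))
    (hx : ‖x‖ = 1) (hxy : ⟪x, y⟫ = 0) :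
    (1 / 2) * min ε δ <
      Real.sqrt (‖snocE x 0 - w‖ ^ 2 + ‖snocE y (g ‖y‖) - 0‖ ^ 2) := by
  have key : ‖snocE y (g ‖y‖)‖ ^ 2 = ‖y‖ ^ 2 + (g ‖y‖) ^ 2 := by
    rw [EuclideanSpace.norm_sq_eq, EuclideanSpace.norm_sq_eq, Fin.sum_univ_castSucc]
    simp [snocE]
  have hmε := min_le_left ε δ
  have hmδ := min_le_right ε δ
  have hm : 0 < min ε δ := lt_min hε hδ
  apply Real.lt_sqrt_of_sq_lt
  rw [sub_zero, key]
  have h0 := sq_nonneg ‖snocE x 0 - w‖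
  have hy := norm_nonneg y
  rcases le_or_gt ‖y‖ (δ / 2) with h | h
  · have h1 := hg _ hy h
    have : (1 / 2 * min ε δ) ^ 2 < (g ‖y‖) ^ 2 :=
      pow_lt_pow_left₀ (by linarith) (by linarith) (by norm_num)
    nlinarith [sq_nonneg ‖y‖]
  · have : (1 / 2 * min ε δ) ^ 2 < ‖y‖ ^ 2 :=
      pow_lt_pow_left₀ (by linarith) (by linarith) (by norm_num)
    nlinarith [sq_nonneg (g ‖y‖)]
end

section
/- Let n ≥ 0, let ε > 0 and δ > 0, set m₀ = (1/2)·min(ε,δ), and let g : ℝ → ℝ satisfy g(s) > ε/2 for all s with 0 ≤ s ≤ δ/2. Let g' : ℝ → ℝ be a function with g'(s) = 0 for all s ≥ m₀. Then for every (x,y) ∈ M_n, the point p = ((x,0),(y,g(‖y‖))) ∈ ℝ^{n+2} × ℝ^{n+2} has nonzero second component with ‖(y,g(‖y‖))‖ > m₀, and the Dehn–Seidel twist with profile g' fixes p: σ_{g'(‖(y,g(‖y‖))‖)}((x,0),(y,g(‖y‖))) = ((x,0),(y,g(‖y‖))). (This is the key step in the proof of Theorem 1.1: a Dehn–Seidel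 twist on DT*S^{n+1} with support smaller than m₀ does not move the pushed-off copy j₁(DT*Sⁿ).) -/
open scoped RealInnerProductSpace

theorem snocE_norm_sq {m : ℕ} (v : EuclideanSpace ℝ (Fin m)) (c : ℝ) :
    ‖snocE v c‖ ^ 2 = ‖v‖ ^ 2 + c ^ 2 := by
  simp [EuclideanSpace.norm_sq_eq, snocE, Fin.sum_univ_castSucc]

/-- A Dehn–Seidel twist on `DT*S^{n+1}` with profile supported below `m₀ = (1/2)·min(ε,δ)`
does not move the pushed-off copy `j₁(DT*Sⁿ)`: for `(x,y) ∈ M_n`, the point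
`p = ((x,0),(y,g(‖y‖)))` has second component of norm `> m₀` (in particular nonzero),
and `σ_{g'(‖(y,g(‖y‖))‖)}` fixes `p`. -/
theorem stmt_10 (n : ℕ) (ε δ : ℝ) (hε : 0 < ε) (hδ : 0 < δ)
    (m₀ : ℝ) (hm₀ : m₀ = (1 / 2) * min ε δ)
    (g : ℝ → ℝ) (hg : ∀ s : ℝ, 0 ≤ s → s ≤ δ / 2 → ε / 2 < g s)
    (g' : ℝ → ℝ) (hg' : ∀ s : ℝ, m₀ ≤ s → g' s = 0)
    (x y : EuclideanSpace ℝ (Fin (n + 1)))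
    (hx : ‖x‖ = 1) (hxy : ⟪x, y⟫ = 0) :
    snocE y (g ‖y‖) ≠ 0 ∧ m₀ < ‖snocE y (g ‖y‖)‖ ∧
      sigmaT (g' ‖snocE y (g ‖y‖)‖) (snocE x 0, snocE y (g ‖y‖)) =
        (snocE x 0, snocE y (g ‖y‖)) := by
  have hsq := snocE_norm_sq y (g ‖y‖)
  have h0 := norm_nonneg (snocE y (g ‖y‖))
  have hy := norm_nonneg y
  have h1 := min_le_left ε δ
  have h2 := min_le_right ε δ
  have hpos : 0 < m₀ := by rw [hm₀]; have := lt_min hε hδ; linarith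
  have hlt : m₀ < ‖snocE y (g ‖y‖)‖ := by
    rcases le_or_gt ‖y‖ (δ / 2) with h | h
    · have hgy := hg _ hy h
      have : g ‖y‖ ≤ ‖snocE y (g ‖y‖)‖ := abs_le_of_sq_le_sq' (by nlinarith) h0 |>.2
      linarith
    · have : ‖y‖ ≤ ‖snocE y (g ‖y‖)‖ := abs_le_of_sq_le_sq' (by nlinarith) h0 |>.2
      linarith
  refine ⟨norm_pos_iff.mp (hpos.trans hlt), hlt, ?_⟩
  rw [hg' _ hlt.le]
  simp [sigmaT]
end

section
/- Let n ≥ 0 and let g : ℝ → ℝ be differentiable. Define τ_g on the open set {(x,y) ∈ ℝ^{n+1} × ℝ^{n+1} : y ≠ 0} by τ_g(x,y) = σ_{g(‖y‖)}(x,y). Then for every (x,y) ∈ M_n with y ≠ 0, the Fréchet derivative of τ_g at (x,y) maps the tangent space T_{(x,y)}M_n into the tangent space T_{τ_g(x,y)}M_n. (This is needed for the Dehn–Seidel twist to be a well-defined diffeomorphism of the manifold T*Sⁿ.) -/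
open scoped RealInnerProductSpace

/-- For `(x,y) ∈ M_n` with `y ≠ 0`, the Fréchet derivative of the Dehn–Seidel twist `τ_g`
at `(x,y)` maps the tangent space `T_{(x,y)}M_n` into the tangent space
`T_{τ_g(x,y)}M_n`. -/
theorem stmt_12 (n : ℕ) (g : ℝ → ℝ) (hg : Differentiable ℝ g)
    (x y : EuclideanSpace ℝ (Fin (n + 1)))
    (hx : ‖x‖ = 1) (hxy : ⟪x, y⟫ = 0) (hy : y ≠ 0)
    (a : EuclideanSpace ℝ (Fin (n + 1)) × EuclideanSpace ℝ (Fin (n + 1)))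
    (ha1 : ⟪x, a.1⟫ = 0) (ha2 : ⟪a.1, y⟫ + ⟪x, a.2⟫ = 0) :
    ⟪(dehnTwist g (x, y)).1, (fderiv ℝ (dehnTwist g) (x, y) a).1⟫ = 0 ∧
      ⟪(fderiv ℝ (dehnTwist g) (x, y) a).1, (dehnTwist g (x, y)).2⟫ +
        ⟪(dehnTwist g (x, y)).1, (fderiv ℝ (dehnTwist g) (x, y) a).2⟫ = 0 := by
  have hr : ‖y‖ ≠ 0 := norm_ne_zero_iff.mpr hy
  obtain ⟨R', hR, hRa⟩ : ∃ R' : (EuclideanSpace ℝ (Fin (n + 1)) × EuclideanSpace ℝ (Fin (n + 1)))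
      →L[ℝ] ℝ, HasFDerivAt (fun p : EuclideanSpace ℝ (Fin (n + 1)) ×
        EuclideanSpace ℝ (Fin (n + 1)) => ‖p.2‖) R' (x, y) ∧ ‖y‖ * R' a = ⟪y, a.2⟫ := by
    have hd : DifferentiableAt ℝ (fun p : EuclideanSpace ℝ (Fin (n + 1)) ×
        EuclideanSpace ℝ (Fin (n + 1)) => ‖p.2‖) (x, y) :=
      DifferentiableAt.norm ℝ differentiableAt_snd hy
    refine ⟨_, hd.hasFDerivAt, ?_⟩
    have h1 := hd.hasFDerivAt.mul hd.hasFDerivAt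
    have h2 := (hasFDerivAt_snd (𝕜 := ℝ) (p := (x, y))).inner ℝ
      (hasFDerivAt_snd (𝕜 := ℝ) (p := (x, y)))
    simp only [real_inner_self_eq_norm_mul_norm] at h2
    have h3 := congrArg (fun L => L a) (h1.unique h2)
    simp [real_inner_comm] at h3
    rw [real_inner_comm]
    rw [real_inner_comm] at h3
    linarith
  have hg' := (hg ‖y‖).hasDerivAt
  have hC := (hg'.cos).comp_hasFDerivAt (x, y) hR
  have hQ := (hg'.sin.div (hasDerivAt_id ‖y‖) hr).comp_hasFDerivAt (x, y) hR
  have hS := (((hasDerivAt_id ‖y‖).mul hg'.sin).neg).comp_hasFDerivAt (x, y) hR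
  have h1 := (hC.smul (hasFDerivAt_fst (𝕜 := ℝ) (p := (x, y)))).add
    (hQ.smul (hasFDerivAt_snd (𝕜 := ℝ) (p := (x, y))))
  have h2 := (hS.smul (hasFDerivAt_fst (𝕜 := ℝ) (p := (x, y)))).add
    (hC.smul (hasFDerivAt_snd (𝕜 := ℝ) (p := (x, y))))
  have h : HasFDerivAt (dehnTwist g) _ (x, y) := h1.prodMk h2
  rw [h.fderiv]
  have hxx : ⟪x, x⟫ = 1 := by rw [real_inner_self_eq_norm_sq, hx]; norm_num
  have hyy : ⟪y, y⟫ = ‖y‖ ^ 2 := real_inner_self_eq_norm_sq y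
  have hyx : ⟪y, x⟫ = 0 := by rw [real_inner_comm]; exact hxy
  have ha1' : ⟪a.1, x⟫ = 0 := by rw [real_inner_comm]; exact ha1
  have e1 : ⟪a.1, y⟫ = - ⟪x, a.2⟫ := by linarith
  have e2 : ⟪y, a.1⟫ = - ⟪x, a.2⟫ := by rw [real_inner_comm]; exact e1
  have e3 : ⟪a.2, x⟫ = ⟪x, a.2⟫ := real_inner_comm _ _
  have e4 : ⟪a.2, y⟫ = ‖y‖ * R' a := by rw [hRa, real_inner_comm]
  have hsc := Real.sin_sq_add_cos_sq (g ‖y‖)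
  simp [-inner_self_eq_norm_sq_to_K, dehnTwist, sigmaT, inner_add_left,
    inner_add_right, inner_smul_left, inner_smul_right, hxx, hyy, hyx, hxy, ha1, ha1', e1, e2, e3, e4, ← hRa]
  constructor
  · field_simp
    ring
  · field_simp
    ring
end

section
/- Let n ≥ 0 and let h : ℝ^{n+1} → ℝ be differentiable. Define J : ℝ^{n+1} × ℝ^{n+1} → ℝ^{n+2} × ℝ^{n+2} by J(x,y) = ((x,0),(y,h(y))). Then for every (x,y) ∈ M_n, the Fréchet derivative of J at (x,y) maps the tangent space T_{(x,y)}M_n into the tangent space T_{J(x,y)}M_{n+1}. (Together with the pullback of the canonical 1-form, this makes each j_t of Lemma 3.1 a proper symplectic embedding of the page DT*Sⁿ into the page DT*S^{n+1}.) -/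
open scoped RealInnerProductSpace

noncomputable def snocL (m : ℕ) : (EuclideanSpace ℝ (Fin m) × ℝ) →L[ℝ] EuclideanSpace ℝ (Fin (m + 1)) :=
  LinearMap.toContinuousLinearMap
    { toFun := fun p => snocE p.1 p.2
      map_add' := by
        intro p q
        ext i
        refine Fin.lastCases ?_ (fun i => ?_) i <;> simp [snocE]
      map_smul' := by
        intro c p
        ext i
        refine Fin.lastCases ?_ (fun i => ?_) i <;> simp [snocE] }

theorem snocL_apply {m : ℕ} (p : EuclideanSpace ℝ (Fin m) × ℝ) : snocL m p = snocE p.1 p.2 := rfl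

theorem inner_snocE {m : ℕ} (v w : EuclideanSpace ℝ (Fin m)) (c d : ℝ) :
    ⟪snocE v c, snocE w d⟫ = ⟪v, w⟫ + c * d := by
  simp [snocE, PiLp.inner_apply, Fin.sum_univ_castSucc, mul_comm]

/-- For `(x,y) ∈ M_n`, the Fréchet derivative of `J(x,y) = ((x,0),(y,h(y)))` at `(x,y)`
maps the tangent space `T_{(x,y)}M_n` into the tangent space `T_{J(x,y)}M_{n+1}`. -/
theorem stmt_13 (n : ℕ) (h : EuclideanSpace ℝ (Fin (n + 1)) → ℝ)
    (hh : Differentiable ℝ h)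
    (J : EuclideanSpace ℝ (Fin (n + 1)) × EuclideanSpace ℝ (Fin (n + 1)) →
         EuclideanSpace ℝ (Fin (n + 2)) × EuclideanSpace ℝ (Fin (n + 2)))
    (hJ : ∀ p, J p = (snocE p.1 0, snocE p.2 (h p.2)))
    (x y : EuclideanSpace ℝ (Fin (n + 1)))
    (hx : ‖x‖ = 1) (hxy : ⟪x, y⟫ = 0)
    (a : EuclideanSpace ℝ (Fin (n + 1)) × EuclideanSpace ℝ (Fin (n + 1)))
    (ha1 : ⟪x, a.1⟫ = 0) (ha2 : ⟪a.1, y⟫ + ⟪x, a.2⟫ = 0) :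
    ⟪(J (x, y)).1, (fderiv ℝ J (x, y) a).1⟫ = 0 ∧
      ⟪(fderiv ℝ J (x, y) a).1, (J (x, y)).2⟫ +
        ⟪(J (x, y)).1, (fderiv ℝ J (x, y) a).2⟫ = 0 := by
  have hd : HasFDerivAt J
      (((snocL (n + 1)).comp ((ContinuousLinearMap.fst ℝ _ _).prod 0)).prod
        ((snocL (n + 1)).comp ((ContinuousLinearMap.snd ℝ _ _).prod
          ((fderiv ℝ h y).comp (ContinuousLinearMap.snd ℝ _ _))))) (x, y) := by
    have hJ' : J = fun p => (snocL (n + 1) (p.1, 0), snocL (n + 1) (p.2, h p.2)) := funext hJ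
    rw [hJ']
    have h1 : HasFDerivAt (fun p : EuclideanSpace ℝ (Fin (n + 1)) × EuclideanSpace ℝ (Fin (n + 1)) =>
        h p.2) ((fderiv ℝ h y).comp (ContinuousLinearMap.snd ℝ _ _)) (x, y) :=
      HasFDerivAt.comp (x, y) (g := h) (hh y).hasFDerivAt hasFDerivAt_snd
    exact ((snocL (n + 1)).hasFDerivAt.comp (x, y)
      (hasFDerivAt_fst.prodMk (hasFDerivAt_const (0 : ℝ) (x, y)))).prodMk
      ((snocL (n + 1)).hasFDerivAt.comp (x, y) (hasFDerivAt_snd.prodMk h1))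
  rw [hd.fderiv, hJ]
  simp [snocL_apply, inner_snocE, ha1, ha2]
end
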